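/- Let S(0,1) denote the standard semicircle law. For every integer k ≥ 0 and every real polynomial p, ∫_{ℝ^{k+1}} (Δᵏp − M_k(p))² dS(0,1)^{⊗(k+1)} ≤ (k+1)·∫_{ℝ^{k+2}} (Δ^{k+1}p)² dS(0,1)^{⊗(k+2)}, where M_k(p) = ∫_{ℝ^{k+1}} Δᵏp dS(0,1)^{⊗(k+1)}. (This is the scalar, one-variable form of the generalized Poincaré inequality on the Wigner space, with constant C_l = 1 for semicircular variables.) -/

import Mathlib

open MeasureTheory

/-- The semicircular distribution of variance `v`; `semicircle 1` is the standard
semicircle law `S(0,1)`. -/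
noncomputable def semicircle (v : ℝ) : Measure ℝ :=
  volume.withDensity fun x => ENNReal.ofReal (Real.sqrt (4 * v - x ^ 2) / (2 * Real.pi * v))

/-- `Δᵏ[x^m](x₀,…,x_k) = Σ_{a₀+⋯+a_k = m−k} x₀^{a₀}⋯x_k^{a_k}` (zero when `m < k`). -/
noncomputable def divDiffMonomial (k m : ℕ) (x : Fin (k + 1) → ℝ) : ℝ :=
  if k ≤ m then
    ∑ a ∈ Finset.Nat.antidiagonalTuple (k + 1) (m - k), ∏ i, x i ^ a i
  else 0

/-- The `k`-th divided difference `Δᵏp` of a real polynomial `p`, extended to a polynomial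
function on `ℝ^{k+1}`. -/
noncomputable def divDiff (k : ℕ) (p : Polynomial ℝ) (x : Fin (k + 1) → ℝ) : ℝ :=
  ∑ m ∈ Finset.range (p.natDegree + 1), p.coeff m * divDiffMonomial k m x

/-!
For the semicircle law of variance `v`, the orthogonal polynomials are the Dickson polynomials of
the second kind `Pₙ = dickson 2 v n`, which have the generating function
`∑ Pₙ(x) tⁿ = (1 - x t + v t²)⁻¹`. A divided difference of such a resolvent in `x` is again a
product of resolvents, so `∑ₙ ΔᵏPₙ(x₀, …, x_k) tⁿ = tᵏ ∏ᵢ (1 - xᵢ t + v t²)⁻¹`; that is, `ΔᵏPₙ` is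
the sum of `P_{a₀}(x₀) ⋯ P_{a_k}(x_k)` over all `a₀ + ⋯ + a_k = n - k` (the case `v = 0` is the
formula for monomials). Hence the `ΔᵏPₙ` are pairwise orthogonal with squared norms
`(n choose k) v^(n - k)`, and centring `Δᵏp` removes exactly the component along `ΔᵏP_k = 1`. The
inequality then holds term by term, since for `n > k`
`(k + 1) v (n choose k + 1) v^(n - k - 1) = (n - k) (n choose k) v^(n - k)`.
-/

open PowerSeries (C X coeff mk)
open Polynomial (dickson)
open scoped Polynomial PowerSeries

section DicksonSeries

variable {R : Type*} [CommRing R]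

/-- The ordinary generating function `∑ Pₙ(x) tⁿ` of the Dickson polynomials of the second kind
`Pₙ = dickson 2 a n`. -/
noncomputable def dicksonSeries (a x : R) : R⟦X⟧ :=
  mk fun n => (dickson 2 a n).eval x

theorem mul_one_sub_add_eq_of_coeff {F G : R⟦X⟧} {a x : R} (h₀ : coeff 0 F = coeff 0 G)
    (h₁ : coeff 1 F - x * coeff 0 F = coeff 1 G)
    (h₂ : ∀ n, coeff (n + 2) F - x * coeff (n + 1) F + a * coeff n F = coeff (n + 2) G) :
    F * (1 - C x * X + C a * X ^ 2) = G := by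
  have expand : F * (1 - C x * X + C a * X ^ 2) = F - C x * (F * X) + C a * (F * X * X) := by
    ring
  rw [expand]
  ext (_ | _ | n)
  · simpa using h₀
  · simpa [PowerSeries.coeff_one_mul] using h₁
  · simpa [PowerSeries.coeff_succ_mul_X] using h₂ n

theorem dickson_two_zero_right (a : R) : dickson 2 a 0 = 1 := by
  rw [Polynomial.dickson_zero]
  norm_num

theorem dicksonSeries_mul_eq_one (a x : R) :
    dicksonSeries a x * (1 - C x * X + C a * X ^ 2) = 1 := by
  apply mul_one_sub_add_eq_of_coeff
  · simp [dicksonSeries, -Polynomial.dickson_zero, dickson_two_zero_right]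
  · simp [dicksonSeries, -Polynomial.dickson_zero, dickson_two_zero_right, PowerSeries.coeff_one]
  · simp [dicksonSeries, PowerSeries.coeff_one, Polynomial.dickson_add_two]

theorem dicksonSeries_zero_left (x : R) : dicksonSeries 0 x = mk fun n => x ^ n := by
  simp [dicksonSeries, Polynomial.dickson_two_zero]

end DicksonSeries

theorem degree_dickson_two {R : Type*} [CommRing R] [Nontrivial R] (a : R) (n : ℕ) :
    (dickson 2 a n).degree = n := by
  induction n using Nat.twoStepInduction with
  | zero => rw [dickson_two_zero_right, Polynomial.degree_one, Nat.cast_zero]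
  | one => simp
  | more n ih₀ ih₁ =>
    have degree_lead : (Polynomial.X * dickson 2 a (n + 1)).degree = ((n + 2 : ℕ) : WithBot ℕ) := by
      rw [Polynomial.X_mul, Polynomial.degree_mul_X, ih₁]
      norm_cast
    have degree_lower : (Polynomial.C a * dickson 2 a n).degree < ((n + 2 : ℕ) : WithBot ℕ) := by
      rw [← Polynomial.smul_eq_C_mul]
      refine (Polynomial.degree_smul_le _ _).trans_lt ?_
      rw [ih₀]
      norm_cast; omega
    rw [Polynomial.dickson_add_two,
      Polynomial.degree_sub_eq_left_of_degree_lt (degree_lower.trans_eq degree_lead.symm),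
      degree_lead]

theorem exists_linearCombination_dickson_two {K : Type*} [Field K] (a : K) (p : K[X]) :
    ∃ c : ℕ →₀ K, Finsupp.linearCombination K (dickson 2 a) c = p := by
  let S : Polynomial.Sequence K := ⟨dickson 2 a, degree_dickson_two a⟩
  have span_eq_top := S.span fun n => (Polynomial.leadingCoeff_ne_zero.2 (S.ne_zero n)).isUnit
  exact Finsupp.mem_span_range_iff_exists_finsupp.1 (span_eq_top ▸ Submodule.mem_top (x := p))

section MultiIndex

/-- The exponents `(a₀, …, a_k)` with `a₀ + ⋯ + a_k = n - k` occurring in `Δᵏ` of a polynomial of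
degree `n`. There are none when `n < k`, where the subtraction would truncate. -/
def divDiffIndices (k n : ℕ) : Finset (Fin (k + 1) → ℕ) :=
  if k ≤ n then Finset.Nat.antidiagonalTuple (k + 1) (n - k) else ∅

theorem mem_divDiffIndices {k n : ℕ} {a : Fin (k + 1) → ℕ} :
    a ∈ divDiffIndices k n ↔ ∑ i, a i + k = n := by
  rw [divDiffIndices]
  split_ifs with h
  · rw [Finset.Nat.mem_antidiagonalTuple]; omega
  · simp only [Finset.notMem_empty, false_iff]; omega

theorem disjoint_divDiffIndices {k m n : ℕ} (h : m ≠ n) :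
    Disjoint (divDiffIndices k m) (divDiffIndices k n) :=
  Finset.disjoint_left.2 fun _ hm hn =>
    h ((mem_divDiffIndices.1 hm).symm.trans (mem_divDiffIndices.1 hn))

theorem coeff_X_pow_mul_prod {R : Type*} [CommSemiring R] (k n : ℕ) (F : Fin (k + 1) → R⟦X⟧) :
    coeff n (X ^ k * ∏ i, F i) = ∑ a ∈ divDiffIndices k n, ∏ i, coeff (a i) (F i) := by
  rw [PowerSeries.coeff_X_pow_mul', divDiffIndices]
  split_ifs
  · rw [PowerSeries.coeff_prod]
    refine Finset.sum_bij (fun a _ => ⇑a) (fun a ha => ?_)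
      (fun a _ b _ hab => DFunLike.coe_injective hab) (fun a ha => ?_) fun _ _ => rfl
    · exact Finset.Nat.mem_antidiagonalTuple.2 (Finset.mem_finsuppAntidiag.1 ha).1
    · exact ⟨Finsupp.equivFunOnFinite.symm a, Finset.mem_finsuppAntidiag.2
        ⟨Finset.Nat.mem_antidiagonalTuple.1 ha, Finset.subset_univ _⟩, rfl⟩
  · rfl

theorem card_divDiffIndices (k n : ℕ) : (divDiffIndices k n).card = n.choose k := by
  have h := coeff_X_pow_mul_prod k n fun _ => (mk 1 : ℤ⟦X⟧)
  rw [Finset.prod_const, Finset.card_fin, PowerSeries.mk_one_pow_eq_mk_choose_add,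
    PowerSeries.coeff_X_pow_mul'] at h
  simp only [PowerSeries.coeff_mk, Pi.one_apply, Finset.prod_const_one, Finset.sum_const,
    nsmul_eq_mul, mul_one] at h
  split_ifs at h with hk
  · rw [Nat.add_sub_cancel' hk] at h
    exact_mod_cast h.symm
  · rw [Nat.choose_eq_zero_of_lt (not_le.1 hk)]
    exact_mod_cast h.symm

end MultiIndex

section DivDiff

theorem divDiffMonomial_eq_coeff (k m : ℕ) (x : Fin (k + 1) → ℝ) :
    divDiffMonomial k m x = coeff m (X ^ k * ∏ i, dicksonSeries 0 (x i)) := by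
  simp only [coeff_X_pow_mul_prod, dicksonSeries_zero_left, PowerSeries.coeff_mk]
  rw [divDiffMonomial, divDiffIndices]
  split_ifs <;> simp

theorem X_pow_succ_mul_prod_dicksonSeries {R : Type*} [CommRing R] (a : R) (k : ℕ)
    (x : Fin (k + 2) → R) :
    (X ^ (k + 1) * ∏ i, dicksonSeries a (x i)) * (1 - C (x 0) * X + C a * X ^ 2) =
      X * (X ^ k * ∏ i, dicksonSeries a (Fin.tail x i)) := by
  rw [Fin.prod_univ_succ]
  simp only [Fin.tail]
  linear_combination (X ^ (k + 1) * ∏ i : Fin (k + 1), dicksonSeries a (x i.succ)) *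
    dicksonSeries_mul_eq_one a (x 0)

theorem divDiffMonomial_succ (k m : ℕ) (x : Fin (k + 2) → ℝ) :
    divDiffMonomial (k + 1) (m + 1) x =
      x 0 * divDiffMonomial (k + 1) m x + divDiffMonomial k m (Fin.tail x) := by
  set F := X ^ (k + 1) * ∏ i, dicksonSeries 0 (x i)
  have shift : F = C (x 0) * (X * F) + X * (X ^ k * ∏ i, dicksonSeries 0 (Fin.tail x i)) := by
    rw [← X_pow_succ_mul_prod_dicksonSeries, map_zero]
    ring
  have h := congrArg (coeff (m + 1)) shift
  rw [map_add, PowerSeries.coeff_C_mul, PowerSeries.coeff_succ_X_mul,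
    PowerSeries.coeff_succ_X_mul] at h
  simpa only [divDiffMonomial_eq_coeff] using h

theorem divDiff_eq_sum (k : ℕ) (p : ℝ[X]) (x : Fin (k + 1) → ℝ) :
    divDiff k p x = p.sum fun m c => c * divDiffMonomial k m x := by
  rw [divDiff, Polynomial.sum_over_range _ fun _ => zero_mul _]

/-- The divided difference at fixed nodes, as a linear functional on polynomials. -/
noncomputable def divDiffLinearMap (k : ℕ) (x : Fin (k + 1) → ℝ) : ℝ[X] →ₗ[ℝ] ℝ where
  toFun p := divDiff k p x
  map_add' p q := by
    simp only [divDiff_eq_sum]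
    exact p.sum_add_index q _ (fun _ => zero_mul _) fun _ _ _ => add_mul _ _ _
  map_smul' c p := by
    simp only [divDiff_eq_sum]
    rw [Polynomial.sum_smul_index' _ _ _ fun _ => zero_mul _, RingHom.id_apply, Polynomial.smul_sum]
    simp only [smul_eq_mul, mul_assoc]

theorem divDiffLinearMap_apply (k : ℕ) (x : Fin (k + 1) → ℝ) (p : ℝ[X]) :
    divDiffLinearMap k x p = divDiff k p x := rfl

theorem divDiff_linearCombination {ι : Type*} (k : ℕ) (P : ι → ℝ[X]) (c : ι →₀ ℝ)
    (x : Fin (k + 1) → ℝ) :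
    divDiff k (Finsupp.linearCombination ℝ P c) x = c.sum fun n a => a * divDiff k (P n) x := by
  simp only [← divDiffLinearMap_apply, Finsupp.linearCombination_apply, map_finsuppSum,
    map_smul, smul_eq_mul]

theorem divDiff_zero_left (p : ℝ[X]) (x : Fin 1 → ℝ) : divDiff 0 p x = p.eval (x 0) := by
  simp [divDiff, divDiffMonomial, Polynomial.eval_eq_sum_range]

theorem divDiff_succ_one (k : ℕ) (x : Fin (k + 2) → ℝ) : divDiff (k + 1) 1 x = 0 := by
  simp [divDiff, divDiffMonomial]

theorem divDiff_succ_X_mul (k : ℕ) (p : ℝ[X]) (x : Fin (k + 2) → ℝ) :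
    divDiff (k + 1) (Polynomial.X * p) x =
      x 0 * divDiff (k + 1) p x + divDiff k p (Fin.tail x) := by
  have divDiff_monomial (k m : ℕ) (c : ℝ) (x : Fin (k + 1) → ℝ) :
      divDiff k (Polynomial.monomial m c) x = c * divDiffMonomial k m x := by
    rw [divDiff_eq_sum, Polynomial.sum_monomial_index c _ (zero_mul _)]
  induction p using Polynomial.induction_on' with
  | add p q hp hq =>
    simp only [← divDiffLinearMap_apply] at hp hq ⊢
    rw [mul_add, map_add, map_add, map_add, hp, hq]
    ring
  | monomial m c =>
    rw [Polynomial.X_mul_monomial, divDiff_monomial, divDiff_monomial, divDiff_monomial,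
      divDiffMonomial_succ]
    ring

theorem mk_divDiff_succ_dickson_two_mul (a : ℝ) (k : ℕ) (x : Fin (k + 2) → ℝ) :
    mk (fun n => divDiff (k + 1) (dickson 2 a n) x) * (1 - C (x 0) * X + C a * X ^ 2) =
      X * mk fun n => divDiff k (dickson 2 a n) (Fin.tail x) := by
  apply mul_one_sub_add_eq_of_coeff
  · simp only [PowerSeries.coeff_mk, dickson_two_zero_right, divDiff_succ_one,
      PowerSeries.coeff_zero_X_mul]
  · have h := divDiff_succ_X_mul k 1 x
    rw [mul_one] at h
    simp [-Polynomial.dickson_zero, dickson_two_zero_right, divDiff_succ_one, h]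
  · intro n
    rw [PowerSeries.coeff_succ_X_mul]
    simp only [PowerSeries.coeff_mk]
    rw [Polynomial.dickson_add_two, ← Polynomial.smul_eq_C_mul, ← divDiffLinearMap_apply, map_sub,
      map_smul, smul_eq_mul, divDiffLinearMap_apply, divDiffLinearMap_apply, divDiff_succ_X_mul]
    ring

theorem mk_divDiff_dickson_two (a : ℝ) (k : ℕ) (x : Fin (k + 1) → ℝ) :
    mk (fun n => divDiff k (dickson 2 a n) x) = X ^ k * ∏ i, dicksonSeries a (x i) := by
  induction k with
  | zero => simp [divDiff_zero_left, dicksonSeries]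
  | succ k ih =>
    have h := mk_divDiff_succ_dickson_two_mul a k x
    rw [ih, ← X_pow_succ_mul_prod_dicksonSeries] at h
    exact mul_right_cancel₀ (right_ne_zero_of_mul_eq_one (dicksonSeries_mul_eq_one a (x 0))) h

theorem divDiff_dickson_two (a : ℝ) (k n : ℕ) (x : Fin (k + 1) → ℝ) :
    divDiff k (dickson 2 a n) x =
      ∑ b ∈ divDiffIndices k n, ∏ i, (dickson 2 a (b i)).eval (x i) := by
  have h := congrArg (coeff n) (mk_divDiff_dickson_two a k x)
  simpa only [coeff_X_pow_mul_prod, dicksonSeries, PowerSeries.coeff_mk] using h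

end DivDiff

section Semicircle

theorem sqrt_four_mul_sub_sq_eq_zero {v x : ℝ} (hx : 2 * √v < |x|) : √(4 * v - x ^ 2) = 0 := by
  have hpos : 0 < |x| / 2 := by linarith [Real.sqrt_nonneg v]
  have h : v < (|x| / 2) ^ 2 := (Real.sqrt_lt' hpos).1 (by linarith)
  apply Real.sqrt_eq_zero_of_nonpos
  linarith [div_pow |x| 2 2, sq_abs x]

instance (v : ℝ) : SigmaFinite (semicircle v) :=
  SigmaFinite.withDensity_ofReal _

theorem integrable_semicircle_of_continuous {f : ℝ → ℝ} (hf : Continuous f) (v : ℝ) :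
    Integrable f (semicircle v) := by
  rw [semicircle, integrable_withDensity_iff_integrable_smul' (by fun_prop) (by simp)]
  simp only [ENNReal.toReal_ofReal', smul_eq_mul]
  refine Continuous.integrable_of_hasCompactSupport (by fun_prop)
    (HasCompactSupport.intro (isCompact_Icc (a := -(2 * √v)) (b := 2 * √v)) fun x hx => ?_)
  rw [sqrt_four_mul_sub_sq_eq_zero (by rwa [← not_le, abs_le]), zero_div, max_self, zero_mul]

variable {v : ℝ}

theorem integral_semicircle_eq_intervalIntegral (hv : 0 ≤ v) (f : ℝ → ℝ) :
    ∫ x, f x ∂semicircle v =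
      ∫ x in -(2 * √v)..2 * √v, √(4 * v - x ^ 2) / (2 * Real.pi * v) * f x := by
  rw [semicircle, integral_withDensity_eq_integral_toReal_smul (by fun_prop) (by simp),
    intervalIntegral.integral_of_le (by linarith [Real.sqrt_nonneg v]),
    ← integral_Icc_eq_integral_Ioc, setIntegral_eq_integral_of_forall_compl_eq_zero]
  · refine integral_congr_ae (.of_forall fun x => ?_)
    beta_reduce
    rw [ENNReal.toReal_ofReal (by positivity), smul_eq_mul]
  · intro x hx
    rw [sqrt_four_mul_sub_sq_eq_zero (by rwa [← not_le, abs_le]), zero_div, zero_mul]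

theorem integral_semicircle_eq_integral_sin_sq (hv : 0 < v) {f : ℝ → ℝ} (hf : Continuous f) :
    ∫ x, f x ∂semicircle v =
      2 / Real.pi * ∫ θ in 0..Real.pi, f (2 * √v * Real.cos θ) * Real.sin θ ^ 2 := by
  have substitution := intervalIntegral.integral_comp_mul_deriv (a := Real.pi) (b := 0)
    (f := fun θ => 2 * √v * Real.cos θ) (f' := fun θ => 2 * √v * -Real.sin θ)
    (g := fun x => √(4 * v - x ^ 2) / (2 * Real.pi * v) * f x)
    (fun θ _ => (Real.hasDerivAt_cos θ).const_mul _) (by fun_prop) (by fun_prop)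
  simp only [Real.cos_pi, Real.cos_zero, mul_neg, mul_one] at substitution
  rw [integral_semicircle_eq_intervalIntegral hv.le, ← substitution, intervalIntegral.integral_symm,
    ← intervalIntegral.integral_neg, ← intervalIntegral.integral_const_mul]
  refine intervalIntegral.integral_congr fun θ hθ => ?_
  rw [Set.uIcc_of_le Real.pi_nonneg] at hθ
  have sqrt_density : √(4 * v - (2 * √v * Real.cos θ) ^ 2) = 2 * √v * Real.sin θ := by
    rw [← Real.sqrt_sq (mul_nonneg (by positivity : 0 ≤ 2 * √v) (Real.sin_nonneg_of_mem_Icc hθ)),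
      mul_pow, mul_pow, mul_pow, mul_pow, Real.sin_sq, Real.sq_sqrt hv.le]
    congr 1
    ring
  simp only [Function.comp_apply, sqrt_density]
  field_simp
  rw [Real.sq_sqrt hv.le]
  ring

theorem integral_cos_int_mul (j : ℤ) :
    ∫ θ in (0 : ℝ)..Real.pi, Real.cos (j * θ) = if j = 0 then Real.pi else 0 := by
  split_ifs with hj
  · simp [hj]
  · rw [intervalIntegral.integral_comp_mul_left (fun t => Real.cos t) (Int.cast_ne_zero.2 hj)]
    simp [Real.sin_int_mul_pi]

theorem integral_sin_nat_mul_sin (m n : ℕ) :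
    ∫ θ in (0 : ℝ)..Real.pi, Real.sin ((m + 1) * θ) * Real.sin ((n + 1) * θ) =
      if m = n then Real.pi / 2 else 0 := by
  have product_to_sum (θ : ℝ) : Real.sin ((m + 1) * θ) * Real.sin ((n + 1) * θ) =
      (Real.cos (((m - n : ℤ) : ℝ) * θ) - Real.cos (((m + n + 2 : ℤ) : ℝ) * θ)) / 2 := by
    push_cast
    rw [show ((m : ℝ) - n) * θ = (m + 1) * θ - (n + 1) * θ by ring,
      show ((m : ℝ) + n + 2) * θ = (m + 1) * θ + (n + 1) * θ by ring, Real.cos_sub, Real.cos_add]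
    ring
  simp only [product_to_sum]
  rw [intervalIntegral.integral_div, intervalIntegral.integral_sub
    (Continuous.intervalIntegrable (by fun_prop) _ _)
    (Continuous.intervalIntegrable (by fun_prop) _ _),
    integral_cos_int_mul, integral_cos_int_mul, if_neg (by omega : (m + n + 2 : ℤ) ≠ 0)]
  simp only [sub_zero, sub_eq_zero, Nat.cast_inj, ite_div, zero_div]

theorem eval_dickson_two_mul_sin (hv : 0 ≤ v) (n : ℕ) (θ : ℝ) :
    (dickson 2 v n).eval (2 * √v * Real.cos θ) * Real.sin θ =
      √v ^ n * Real.sin ((n + 1) * θ) := by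
  induction n using Nat.twoStepInduction with
  | zero => simp [-Polynomial.dickson_zero, dickson_two_zero_right]
  | one =>
    simp only [Polynomial.dickson_one, Polynomial.eval_X, pow_one, Nat.cast_one,
      one_add_one_eq_two, Real.sin_two_mul]
    ring
  | more n ih₀ ih₁ =>
    have sum_to_product : Real.sin ((n + 2 + 1) * θ) =
        2 * Real.cos θ * Real.sin ((n + 1 + 1) * θ) - Real.sin ((n + 1) * θ) := by
      rw [show ((n : ℝ) + 2 + 1) * θ = (n + 1 + 1) * θ + θ by ring,
        show ((n : ℝ) + 1) * θ = (n + 1 + 1) * θ - θ by ring, Real.sin_add, Real.sin_sub]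
      ring
    rw [Polynomial.dickson_add_two, Polynomial.eval_sub, Polynomial.eval_mul, Polynomial.eval_mul,
      Polynomial.eval_X, Polynomial.eval_C]
    push_cast at ih₁ ⊢
    rw [sum_to_product]
    linear_combination 2 * √v * Real.cos θ * ih₁ - v * ih₀ +
      √v ^ n * Real.sin ((n + 1) * θ) * Real.sq_sqrt hv

theorem integral_dickson_two_mul_dickson_two (hv : 0 < v) (m n : ℕ) :
    ∫ x, (dickson 2 v m).eval x * (dickson 2 v n).eval x ∂semicircle v =
      if m = n then v ^ n else 0 := by
  have trig (θ : ℝ) : (dickson 2 v m).eval (2 * √v * Real.cos θ) *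
      (dickson 2 v n).eval (2 * √v * Real.cos θ) * Real.sin θ ^ 2 =
        √v ^ (m + n) * (Real.sin ((m + 1) * θ) * Real.sin ((n + 1) * θ)) := by
    linear_combination
      (dickson 2 v n).eval (2 * √v * Real.cos θ) * Real.sin θ * eval_dickson_two_mul_sin hv.le m θ +
      √v ^ m * Real.sin ((m + 1) * θ) * eval_dickson_two_mul_sin hv.le n θ
  rw [integral_semicircle_eq_integral_sin_sq hv (by fun_prop)]
  simp only [trig]
  rw [intervalIntegral.integral_const_mul, integral_sin_nat_mul_sin]
  split_ifs with h
  · rw [h, ← two_mul, pow_mul, Real.sq_sqrt hv.le]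
    field_simp
  · simp only [mul_zero]

end Semicircle

section SumMulSum

variable {Ω ι κ A : Type*} [MeasurableSpace Ω] {μ : Measure Ω} [NormedRing A] {s : Finset ι}
  {t : Finset κ} {f : ι → Ω → A} {g : κ → Ω → A}

theorem integrable_sum_mul_sum
    (h : ∀ i ∈ s, ∀ j ∈ t, Integrable (fun x => f i x * g j x) μ) :
    Integrable (fun x => (∑ i ∈ s, f i x) * ∑ j ∈ t, g j x) μ := by
  simp only [Finset.sum_mul_sum]
  exact integrable_finsetSum _ fun i hi => integrable_finsetSum _ (h i hi)

theorem integral_sum_mul_sum [NormedSpace ℝ A]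
    (h : ∀ i ∈ s, ∀ j ∈ t, Integrable (fun x => f i x * g j x) μ) :
    ∫ x, (∑ i ∈ s, f i x) * ∑ j ∈ t, g j x ∂μ =
      ∑ i ∈ s, ∑ j ∈ t, ∫ x, f i x * g j x ∂μ := by
  simp only [Finset.sum_mul_sum]
  rw [integral_finsetSum _ fun i hi => integrable_finsetSum _ (h i hi)]
  exact Finset.sum_congr rfl fun i hi => integral_finsetSum _ (h i hi)

end SumMulSum

section SemicirclePi

theorem integrable_prod_eval_mul_prod_eval {ι : Type*} [Fintype ι] (P Q : ι → ℝ[X]) (v : ℝ) :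
    Integrable (fun x : ι → ℝ => (∏ i, (P i).eval (x i)) * ∏ i, (Q i).eval (x i))
      (Measure.pi fun _ => semicircle v) := by
  simp only [← Finset.prod_mul_distrib]
  exact Integrable.fintype_prod (f := fun i t => (P i).eval t * (Q i).eval t)
    fun i => integrable_semicircle_of_continuous (by fun_prop) v

theorem integrable_divDiff_dickson_two_mul (v : ℝ) (k m n : ℕ) :
    Integrable (fun x => divDiff k (dickson 2 v m) x * divDiff k (dickson 2 v n) x)
      (Measure.pi fun _ => semicircle v) := by
  simp only [divDiff_dickson_two]
  exact integrable_sum_mul_sum fun _ _ _ _ => integrable_prod_eval_mul_prod_eval _ _ v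

variable {v : ℝ}

theorem integral_prod_dickson_two_mul {ι : Type*} [Fintype ι] (hv : 0 < v)
    (a b : ι → ℕ) :
    ∫ x : ι → ℝ, (∏ i, (dickson 2 v (a i)).eval (x i)) * ∏ i, (dickson 2 v (b i)).eval (x i)
        ∂(Measure.pi fun _ => semicircle v) =
      if a = b then v ^ ∑ i, b i else 0 := by
  simp only [← Finset.prod_mul_distrib]
  rw [integral_fintype_prod_eq_prod (E := fun _ : ι => ℝ)
    (fun i t => (dickson 2 v (a i)).eval t * (dickson 2 v (b i)).eval t)]
  simp only [integral_dickson_two_mul_dickson_two hv, Finset.prod_ite_zero, Finset.mem_univ,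
    true_imp_iff, Finset.prod_pow_eq_pow_sum, funext_iff (f := a)]

theorem integral_divDiff_dickson_two_mul (hv : 0 < v) (k m n : ℕ) :
    ∫ x, divDiff k (dickson 2 v m) x * divDiff k (dickson 2 v n) x
        ∂(Measure.pi fun _ => semicircle v) =
      if m = n then n.choose k * v ^ (n - k) else 0 := by
  simp only [divDiff_dickson_two]
  rw [integral_sum_mul_sum fun _ _ _ _ => integrable_prod_eval_mul_prod_eval _ _ v]
  simp only [integral_prod_dickson_two_mul hv, Finset.sum_ite_eq]
  split_ifs with h
  · subst h
    have summand {a : Fin (k + 1) → ℕ} (ha : a ∈ divDiffIndices k m) :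
        (if a ∈ divDiffIndices k m then v ^ ∑ i, a i else 0) = v ^ (m - k) := by
      rw [if_pos ha, Nat.eq_sub_of_add_eq (mem_divDiffIndices.1 ha)]
    rw [Finset.sum_congr rfl fun _ => summand, Finset.sum_const, card_divDiffIndices,
      nsmul_eq_mul]
  · exact Finset.sum_eq_zero fun a ha =>
      if_neg (Finset.disjoint_left.1 (disjoint_divDiffIndices h) ha)

theorem integral_divDiff_linearCombination_mul (hv : 0 < v) (k : ℕ) (c d : ℕ →₀ ℝ) :
    ∫ x, divDiff k (Finsupp.linearCombination ℝ (dickson 2 v) c) x *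
          divDiff k (Finsupp.linearCombination ℝ (dickson 2 v) d) x
        ∂(Measure.pi fun _ => semicircle v) =
      ∑ n ∈ c.support, c n * d n * (n.choose k * v ^ (n - k)) := by
  simp only [divDiff_linearCombination, Finsupp.sum]
  rw [integral_sum_mul_sum fun m _ n _ => by
    simpa only [mul_mul_mul_comm] using
      (integrable_divDiff_dickson_two_mul v k m n).const_mul (c m * d n)]
  refine Finset.sum_congr rfl fun m _ => ?_
  have integral_term (n : ℕ) :
      ∫ x, c m * divDiff k (dickson 2 v m) x * (d n * divDiff k (dickson 2 v n) x)
          ∂(Measure.pi fun _ => semicircle v) =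
        if m = n then c m * d n * (n.choose k * v ^ (n - k)) else 0 := by
    simp only [mul_mul_mul_comm (c m) _ (d n)]
    rw [integral_const_mul, integral_divDiff_dickson_two_mul hv, mul_ite, mul_zero]
  simp only [integral_term, Finset.sum_ite_eq, Finsupp.mem_support_iff]
  split_ifs with h
  · rfl
  · rw [not_not.1 h, mul_zero, zero_mul]

theorem divDiff_dickson_two_self (a : ℝ) (k : ℕ) (x : Fin (k + 1) → ℝ) :
    divDiff k (dickson 2 a k) x = 1 := by
  simp [divDiff_dickson_two, divDiffIndices, Finset.Nat.antidiagonalTuple_zero_right,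
    -Polynomial.dickson_zero, dickson_two_zero_right]

theorem integral_divDiff_linearCombination (hv : 0 < v) (k : ℕ) (c : ℕ →₀ ℝ) :
    ∫ x, divDiff k (Finsupp.linearCombination ℝ (dickson 2 v) c) x
        ∂(Measure.pi fun _ => semicircle v) = c k := by
  have h := integral_divDiff_linearCombination_mul hv k (Finsupp.single k 1) c
  simpa [Finsupp.support_single, divDiff_dickson_two_self] using h

theorem divDiff_linearCombination_sub (a : ℝ) (k : ℕ) (c : ℕ →₀ ℝ) (x : Fin (k + 1) → ℝ) :
    divDiff k (Finsupp.linearCombination ℝ (dickson 2 a) c) x - c k =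
      divDiff k (Finsupp.linearCombination ℝ (dickson 2 a) (c.erase k)) x := by
  nth_rw 1 [← Finsupp.single_add_erase k c]
  simp only [← divDiffLinearMap_apply, map_add, Finsupp.linearCombination_single, map_smul]
  rw [divDiffLinearMap_apply k x (dickson 2 a k), divDiff_dickson_two_self, smul_eq_mul, mul_one,
    add_sub_cancel_left]

theorem integral_divDiff_sub_sq (hv : 0 < v) (k : ℕ) (c : ℕ →₀ ℝ) :
    ∫ x, (divDiff k (Finsupp.linearCombination ℝ (dickson 2 v) c) x - c k) ^ 2
        ∂(Measure.pi fun _ => semicircle v) =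
      ∑ n ∈ c.support.erase k, c n ^ 2 * (n.choose k * v ^ (n - k)) := by
  simp only [divDiff_linearCombination_sub, pow_two]
  rw [integral_divDiff_linearCombination_mul hv, Finsupp.support_erase]
  refine Finset.sum_congr rfl fun n hn => ?_
  rw [Finsupp.erase_ne (Finset.ne_of_mem_erase hn)]

end SemicirclePi

theorem choose_mul_pow_sub_le {R : Type*} [CommRing R] [LinearOrder R] [IsStrictOrderedRing R]
    {v : R} (hv : 0 ≤ v) {k n : ℕ} (h : n ≠ k) :
    n.choose k * v ^ (n - k) ≤ (k + 1) * v * (n.choose (k + 1) * v ^ (n - (k + 1))) := by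
  rcases h.lt_or_gt with hlt | hgt
  · simp [Nat.choose_eq_zero_of_lt hlt, Nat.choose_eq_zero_of_lt (hlt.trans k.lt_succ_self)]
  · obtain ⟨j, rfl⟩ := Nat.exists_eq_add_of_lt hgt
    have choose_succ : ((k + j + 1).choose (k + 1) * (k + 1) : R) =
        (k + j + 1).choose k * (j + 1) := by
      have := Nat.choose_succ_right_eq (k + j + 1) k
      rw [show k + j + 1 - k = j + 1 by omega] at this
      exact_mod_cast this
    rw [show k + j + 1 - k = j + 1 by omega, show k + j + 1 - (k + 1) = j by omega]
    calc (k + j + 1).choose k * v ^ (j + 1)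
        ≤ (k + j + 1).choose k * (j + 1) * v ^ (j + 1) := by
          gcongr
          exact le_mul_of_one_le_right (by positivity) (by simp)
      _ = (k + 1) * v * ((k + j + 1).choose (k + 1) * v ^ j) := by
          rw [← choose_succ]; ring

theorem semicircle_generalized_poincare_general {v : ℝ} (hv : 0 < v) (k : ℕ) (p : Polynomial ℝ) :
    ∫ x : Fin (k + 1) → ℝ,
        (divDiff k p x -
          ∫ y : Fin (k + 1) → ℝ, divDiff k p y ∂(Measure.pi fun _ => semicircle v)) ^ 2
        ∂(Measure.pi fun _ => semicircle v) ≤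
      (k + 1 : ℝ) * v *
        ∫ x : Fin (k + 2) → ℝ, (divDiff (k + 1) p x) ^ 2 ∂(Measure.pi fun _ => semicircle v) := by
  obtain ⟨c, rfl⟩ := exists_linearCombination_dickson_two v p
  have parseval := integral_divDiff_linearCombination_mul hv (k + 1) c c
  simp only [← pow_two] at parseval
  rw [integral_divDiff_linearCombination hv, integral_divDiff_sub_sq hv, parseval]
  calc ∑ n ∈ c.support.erase k, c n ^ 2 * (n.choose k * v ^ (n - k))
      ≤ ∑ n ∈ c.support.erase k,
          c n ^ 2 * ((k + 1) * v * (n.choose (k + 1) * v ^ (n - (k + 1)))) :=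
        Finset.sum_le_sum fun n hn => mul_le_mul_of_nonneg_left
          (choose_mul_pow_sub_le hv.le (Finset.ne_of_mem_erase hn)) (sq_nonneg _)
    _ ≤ ∑ n ∈ c.support, c n ^ 2 * ((k + 1) * v * (n.choose (k + 1) * v ^ (n - (k + 1)))) :=
        Finset.sum_le_sum_of_subset_of_nonneg (Finset.erase_subset _ _) fun _ _ _ => by positivity
    _ = (k + 1) * v * ∑ n ∈ c.support, c n ^ 2 * (n.choose (k + 1) * v ^ (n - (k + 1))) := by
        rw [Finset.mul_sum]
        exact Finset.sum_congr rfl fun _ _ => mul_left_comm _ _ _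

/-- Generalized Poincaré inequality for the standard semicircle law (scalar form, with
constant `1`): for every `k ≥ 0` and every real polynomial `p`,
`∫ (Δᵏp − M_k(p))² dS(0,1)^{⊗(k+1)} ≤ (k+1)·∫ (Δ^{k+1}p)² dS(0,1)^{⊗(k+2)}`,
where `M_k(p)` is the mean of `Δᵏp` against `S(0,1)^{⊗(k+1)}`. -/
theorem semicircle_generalized_poincare (k : ℕ) (p : Polynomial ℝ) :
    ∫ x : Fin (k + 1) → ℝ,
        (divDiff k p x -
          ∫ y : Fin (k + 1) → ℝ, divDiff k p y ∂(Measure.pi fun _ => semicircle 1)) ^ 2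
        ∂(Measure.pi fun _ => semicircle 1) ≤
      (k + 1 : ℝ) *
        ∫ x : Fin (k + 2) → ℝ, (divDiff (k + 1) p x) ^ 2 ∂(Measure.pi fun _ => semicircle 1) := by
  simpa using semicircle_generalized_poincare_general one_pos k p
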